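/- Assume (A1'), (A2) and (A3). Let λ₀ ∈ D be a point at which Λ is differentiable and set x₀ = ∇Λ(λ₀). If liminf_{n→∞} (log k(n))/n > Λ*(x₀), then with probability 1, lim_{ε→0} lim_{n→∞} (1/n) log μ_n^ω(B(x₀,ε)) = −Λ*(x₀), where B(x₀,ε) is the closed ball of center x₀ and radius ε. (Theorem 5(2), first part.) -/

import Mathlib

open MeasureTheory ProbabilityTheory Filter Set Real
open scoped ENNReal NNReal Classical Topology RealInnerProductSpace

/-!
Write `pₙ = P(SₙΦ(X)/n ∈ B(x₀, ε))`. Differentiability of `Λ` at `λ₀` forces the law of `SₙΦ(X)/n`,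
tilted by `exp ⟨λ₀, SₙΦ(X)⟩`, to concentrate at `x₀`: outside a ball it is covered by finitely many
half-spaces `⟨v, · - x₀⟩ > 1`, and replacing `λ₀` by `λ₀ + t v` with `t` small makes each of them
exponentially negligible. Undoing the tilt, `pₙ` decays at a rate which tends, as `ε → 0`, to
`⟨λ₀, x₀⟩ - Λ(λ₀) = Λ*(x₀)`.

The mean of `μₙ^ω(B(x₀, ε))` is `pₙ`, so the upper bound follows from Markov's inequality and the
Borel–Cantelli lemma. For the lower bound, (A3) reduces the matter to blocks of coordinates, and the
covariance of two block events of probability `p` is at most `p` and at most a mixing coefficient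
`α`, hence at most `p^(1-θ) α^θ`. By (A2) the `α^θ` are summable for every `θ > 0`, so
Chebyshev's inequality bounds the probability that `μₙ^ω` gives the ball mass at most `p / 2` by a
constant times `p^(-(1+θ)) / k(n)`. Since `k(n)` grows faster than `exp (n Λ*(x₀))`, this is
summable for `θ` small.

The approximants in (A3) need not be measurable, so blocks are formed by applying `SₙΦ` itself to
the sequence whose coordinates outside the block are frozen; this only doubles the error.
-/

open ExpGrowth

section ExponentialGrowth

variable {u v : ℕ → ℝ≥0∞} {a : ℝ}

lemma expGrowthSup_ofReal_exp (a : ℝ) :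
    expGrowthSup (fun n => ENNReal.ofReal (exp (n * a))) = a := by
  rw [← expGrowthSup_exp (a := (a : EReal))]
  congr! 2 with n
  rw [mul_comm, ← EReal.exp_coe]
  norm_cast

lemma expGrowthInf_ofReal_exp (a : ℝ) :
    expGrowthInf (fun n => ENNReal.ofReal (exp (n * a))) = a := by
  rw [← expGrowthInf_exp (a := (a : EReal))]
  congr! 2 with n
  rw [mul_comm, ← EReal.exp_coe]
  norm_cast

lemma eventually_ofReal_exp_le (h : a < expGrowthInf u) :
    ∀ᶠ n : ℕ in atTop, ENNReal.ofReal (exp (n * a)) ≤ u n := by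
  filter_upwards [eventually_exp_le h] with n hn
  rw [mul_comm, ← EReal.exp_coe]
  exact_mod_cast hn

lemma eventually_pos_of_bot_lt_expGrowthInf (h : ⊥ < expGrowthInf u) :
    ∀ᶠ n : ℕ in atTop, 0 < u n := by
  obtain ⟨a, -, ha⟩ := EReal.lt_iff_exists_real_btwn.1 h
  exact (eventually_ofReal_exp_le ha).mono fun n => (ENNReal.ofReal_pos.2 (exp_pos _)).trans_le

lemma eventually_le_ofReal_exp (h : expGrowthSup u < a) :
    ∀ᶠ n : ℕ in atTop, u n ≤ ENNReal.ofReal (exp (n * a)) := by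
  filter_upwards [eventually_le_exp h] with n hn
  rw [mul_comm, ← EReal.exp_coe]
  exact_mod_cast hn

lemma add_expGrowthSup_le_of_exp_mul_le
    (h : ∀ᶠ n : ℕ in atTop, ENNReal.ofReal (exp (n * a)) * u n ≤ v n) :
    a + expGrowthSup u ≤ expGrowthSup v := by
  rw [← expGrowthInf_ofReal_exp a]
  exact le_expGrowthSup_mul'.trans (expGrowthSup_eventually_monotone h)

lemma expGrowthInf_le_add_of_le_exp_mul
    (h : ∀ᶠ n : ℕ in atTop, u n ≤ ENNReal.ofReal (exp (n * a)) * v n) :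
    expGrowthInf u ≤ a + expGrowthInf v := by
  rw [← expGrowthSup_ofReal_exp a]
  refine (expGrowthInf_eventually_monotone h).trans (expGrowthInf_mul_le ?_ ?_) <;>
    exact Or.inl (by simp [expGrowthSup_ofReal_exp])

lemma expGrowthInf_add_le : expGrowthInf (u + v) ≤ expGrowthInf u ⊔ expGrowthSup v := by
  have h_add : expGrowthInf (u + v) ≤ expGrowthInf (u ⊔ v) :=
    expGrowthInf_le_of_eventually_le ENNReal.ofNat_ne_top <| .of_forall fun n => by
      rw [two_mul]
      exact add_le_add le_sup_left le_sup_right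
  refine h_add.trans (le_of_forall_gt fun a ha => ?_)
  obtain ⟨b, hb, hba⟩ := exists_between ha
  obtain ⟨hu, hv⟩ := max_lt_iff.1 hb
  refine (Frequently.expGrowthInf_le ?_).trans_lt hba
  exact ((frequently_le_exp hu).and_eventually (eventually_le_exp hv)).mono fun n h =>
    sup_le h.1 h.2

lemma ae_eventually_notMem_of_expGrowthSup_neg {α : Type*} [MeasurableSpace α] {μ : Measure α}
    {s : ℕ → Set α} (h : expGrowthSup (fun n => μ (s n)) < 0) :
    ∀ᵐ x ∂μ, ∀ᶠ n in atTop, x ∉ s n := by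
  obtain ⟨a, hsa, ha⟩ := EReal.lt_iff_exists_real_btwn.1 h
  obtain ⟨N, hN⟩ := eventually_atTop.1 (eventually_le_ofReal_exp hsa)
  have hsum : Summable fun n : ℕ => exp (n * a) :=
    Real.summable_exp_nat_mul_iff.2 (by exact_mod_cast ha)
  have htail : ∑' n, μ (s (n + N)) ≠ ∞ :=
    ne_top_of_le_ne_top ((summable_nat_add_iff N).2 hsum).tsum_ofReal_ne_top
      (ENNReal.tsum_le_tsum fun n => hN (n + N) (Nat.le_add_left N n))
  filter_upwards [ae_eventually_notMem htail] with x hx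
  rw [← map_add_atTop_eq_nat N]
  exact hx

lemma ae_expGrowthSup_le_expGrowthSup_lintegral {α : Type*} [MeasurableSpace α] {μ : Measure α}
    {f : ℕ → α → ℝ≥0∞} (hf : ∀ n, AEMeasurable (f n) μ) :
    ∀ᵐ x ∂μ, expGrowthSup (fun n => f n x) ≤ expGrowthSup (fun n => ∫⁻ x, f n x ∂μ) := by
  have hrat : ∀ᵐ x ∂μ, ∀ q : ℚ, expGrowthSup (fun n => ∫⁻ x, f n x ∂μ) < ((q : ℝ) : EReal) →
      expGrowthSup (fun n => f n x) ≤ ((q : ℝ) : EReal) := by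
    refine ae_all_iff.2 fun q => eventually_imp_distrib_left.2 fun hq => ?_
    have hmarkov : ((q : ℝ) : EReal) + expGrowthSup
        (fun n : ℕ => μ {x | ENNReal.ofReal (exp (n * q)) ≤ f n x}) < (q : ℝ) :=
      (add_expGrowthSup_le_of_exp_mul_le <| .of_forall fun n =>
        mul_meas_ge_le_lintegral₀ (hf n) _).trans_lt hq
    have hneg : expGrowthSup (fun n : ℕ => μ {x | ENNReal.ofReal (exp (n * q)) ≤ f n x}) < 0 := by
      by_contra! h
      exact absurd hmarkov (not_lt.2 (le_add_of_nonneg_right h))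
    filter_upwards [ae_eventually_notMem_of_expGrowthSup_neg hneg] with x hx
    rw [← expGrowthSup_ofReal_exp q]
    exact expGrowthSup_eventually_monotone (hx.mono fun n hn => (not_le.1 hn).le)
  filter_upwards [hrat] with x hx
  refine le_of_forall_gt fun a ha => ?_
  obtain ⟨q, hq, hqa⟩ := EReal.lt_iff_exists_rat_btwn.1 ha
  exact (hx q hq).trans_lt hqa

lemma inv_mul_log_eq_log_div (n : ℕ) (x : ℝ≥0∞) :
    ((n : ℝ)⁻¹ : EReal) * ENNReal.log x = ENNReal.log x / n := by
  rw [EReal.div_eq_inv_mul, EReal.coe_coe_eq_natCast]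

lemma coe_log_div_eq_log_div (n : ℕ) {m : ℕ} (hm : 0 < m) :
    ((Real.log m / n : ℝ) : EReal) = ENNReal.log m / n := by
  rw [EReal.coe_div, ← ENNReal.ofReal_natCast m, ENNReal.log_ofReal_of_pos (by exact_mod_cast hm),
    EReal.coe_coe_eq_natCast]

end ExponentialGrowth

section LocalGartnerEllis

variable {Ω : Type*} [MeasurableSpace Ω] {P : Measure Ω}

lemma exp_mul_setLIntegral_exp_le {s : Set Ω} (hs : MeasurableSet s) {f g : Ω → ℝ} {a : ℝ}
    (h : ∀ ω ∈ s, a + f ω ≤ g ω) :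
    ENNReal.ofReal (exp a) * ∫⁻ ω in s, ENNReal.ofReal (exp (f ω)) ∂P ≤
      ∫⁻ ω, ENNReal.ofReal (exp (g ω)) ∂P := by
  rw [← lintegral_const_mul' _ _ ENNReal.ofReal_ne_top]
  refine (setLIntegral_mono' hs fun ω hω => ?_).trans (setLIntegral_le_lintegral s _)
  rw [← ENNReal.ofReal_mul (exp_pos a).le, ← exp_add]
  exact ENNReal.ofReal_le_ofReal (exp_le_exp.2 (h ω hω))

lemma lintegral_biUnion_finset_le {ι : Type*} (V : Finset ι) (s : ι → Set Ω) (f : Ω → ℝ≥0∞) :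
    ∫⁻ ω in ⋃ v ∈ V, s v, f ω ∂P ≤ ∑ v ∈ V, ∫⁻ ω in s v, f ω ∂P := by
  induction V using Finset.induction_on with
  | empty => simp
  | insert v V hv ih =>
    rw [Finset.sum_insert hv, Finset.set_biUnion_insert]
    exact (lintegral_union_le _ _ _).trans (by gcongr)

variable {V : Type*} [NormedAddCommGroup V] [InnerProductSpace ℝ V]

/-- The exponential moments `E[exp⟨lam, Y n⟩]` of a sequence of random vectors, as a sequence in
`n`; its exponential growth rate is the limiting logarithmic moment generating function. -/
noncomputable def expMoment (P : Measure Ω) (Y : ℕ → Ω → V) (lam : V) (n : ℕ) : ℝ≥0∞ :=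
  ∫⁻ ω, ENNReal.ofReal (exp ⟪lam, Y n ω⟫) ∂P

lemma abs_inner_sub_le_of_inv_smul_mem_closedBall {n : ℕ} (hn : 0 < n) (lam : V) {x y : V} {ε : ℝ}
    (h : (n : ℝ)⁻¹ • y ∈ Metric.closedBall x ε) :
    |⟪lam, y⟫ - n * ⟪lam, x⟫| ≤ n * (‖lam‖ * ε) := by
  have hn' : (0 : ℝ) < n := by exact_mod_cast hn
  calc |⟪lam, y⟫ - n * ⟪lam, x⟫| = n * |⟪lam, (n : ℝ)⁻¹ • y - x⟫| := by
        rw [← abs_of_pos hn', ← abs_mul, abs_of_pos hn', inner_sub_right, inner_smul_right, mul_sub,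
          mul_inv_cancel_left₀ hn'.ne']
    _ ≤ n * (‖lam‖ * ‖(n : ℝ)⁻¹ • y - x‖) := by gcongr; exact abs_real_inner_le_norm _ _
    _ ≤ n * (‖lam‖ * ε) := by gcongr; exact mem_closedBall_iff_norm.1 h

lemma exists_finset_forall_lt_norm_one_lt_inner [FiniteDimensional ℝ V] {ε : ℝ} (hε : 0 < ε) :
    ∃ s : Finset V, ∀ y, ε < ‖y‖ → ∃ v ∈ s, 1 < ⟪v, y⟫ := by
  obtain ⟨t, -, hcover⟩ := (isCompact_sphere (0 : V) 1).elim_nhds_subcover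
    (fun u => {w | 1 / 2 < ⟪u, w⟫}) fun u hu =>
      (isOpen_lt continuous_const (by fun_prop)).mem_nhds <| by
        have : ‖u‖ = 1 := by simpa using hu
        norm_num [real_inner_self_eq_norm_sq, this]
  refine ⟨t.image ((2 / ε) • ·), fun y hy => ?_⟩
  have hy0 : 0 < ‖y‖ := hε.trans hy
  have hmem : ‖y‖⁻¹ • y ∈ Metric.sphere (0 : V) 1 := by
    simp [norm_smul, hy0.ne']
  obtain ⟨u, hu, huy⟩ := mem_iUnion₂.1 (hcover hmem)
  have hinner : ‖y‖ / 2 < ⟪u, y⟫ := by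
    have : 1 / 2 < ‖y‖⁻¹ * ⟪u, y⟫ := by simpa [inner_smul_right] using huy
    rw [lt_inv_mul_iff₀ hy0] at this
    linarith
  refine ⟨_, Finset.mem_image_of_mem _ hu, ?_⟩
  rw [inner_smul_left, conj_trivial, div_mul_eq_mul_div, one_lt_div hε]
  linarith

variable [MeasurableSpace V] [BorelSpace V] {Y : ℕ → Ω → V} {lam₀ x₀ : V} {Λ : V → ℝ}

lemma measurableSet_inv_smul_mem_closedBall {y : Ω → V} (hy : Measurable y) (n : ℕ) (x : V)
    (ε : ℝ) : MeasurableSet {ω | (n : ℝ)⁻¹ • y ω ∈ Metric.closedBall x ε} :=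
  (hy.const_smul _) Metric.isClosed_closedBall.measurableSet

lemma add_expGrowthSup_measure_closedBall_le (hY : ∀ n, Measurable (Y n)) (lam x : V) (ε : ℝ) :
    ((⟪lam, x⟫ - ‖lam‖ * ε : ℝ) : EReal) +
      expGrowthSup (fun n => P {ω | (n : ℝ)⁻¹ • Y n ω ∈ Metric.closedBall x ε}) ≤
      expGrowthSup (expMoment P Y lam) := by
  refine add_expGrowthSup_le_of_exp_mul_le ?_
  filter_upwards [eventually_gt_atTop 0] with n hn
  have h := exp_mul_setLIntegral_exp_le (P := P) (f := fun _ => 0) (g := fun ω => ⟪lam, Y n ω⟫)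
    (a := n * (⟪lam, x⟫ - ‖lam‖ * ε))
    (measurableSet_inv_smul_mem_closedBall (hY n) n x ε) fun ω hω => by
      linarith [(abs_le.1 (abs_inner_sub_le_of_inv_smul_mem_closedBall hn lam hω)).1]
  simpa [expMoment] using h

lemma add_expGrowthSup_setLIntegral_halfSpace_le [SecondCountableTopology V]
    (hY : ∀ n, Measurable (Y n)) (lam v x : V) {t : ℝ} (ht : 0 ≤ t) :
    ((t * (⟪v, x⟫ + 1) : ℝ) : EReal) +
      expGrowthSup (fun n => ∫⁻ ω in {ω | 1 < ⟪v, (n : ℝ)⁻¹ • Y n ω - x⟫},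
        ENNReal.ofReal (exp ⟪lam, Y n ω⟫) ∂P) ≤
      expGrowthSup (expMoment P Y (lam + t • v)) := by
  refine add_expGrowthSup_le_of_exp_mul_le ?_
  filter_upwards [eventually_gt_atTop 0] with n hn
  have hn' : (0 : ℝ) < n := by exact_mod_cast hn
  have hs : MeasurableSet {ω | 1 < ⟪v, (n : ℝ)⁻¹ • Y n ω - x⟫} :=
    measurableSet_lt measurable_const
      (measurable_const.inner (((hY n).const_smul _).sub measurable_const))
  refine exp_mul_setLIntegral_exp_le hs fun ω hω => ?_
  have hω' : ⟪v, x⟫ + 1 < (n : ℝ)⁻¹ * ⟪v, Y n ω⟫ := by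
    rw [mem_ofPred_eq, inner_sub_right, inner_smul_right] at hω
    linarith
  rw [lt_inv_mul_iff₀ hn'] at hω'
  rw [inner_add_left, inner_smul_left, conj_trivial]
  linarith [mul_le_mul_of_nonneg_left hω'.le ht]

variable [FiniteDimensional ℝ V]

lemma expGrowthSup_setLIntegral_halfSpace_lt (hY : ∀ n, Measurable (Y n))
    (hup : ∀ᶠ lam in 𝓝 lam₀, expGrowthSup (expMoment P Y lam) ≤ Λ lam)
    (hx₀ : HasGradientAt Λ x₀ lam₀) (v : V) :
    expGrowthSup (fun n => ∫⁻ ω in {ω | 1 < ⟪v, (n : ℝ)⁻¹ • Y n ω - x₀⟫},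
      ENNReal.ofReal (exp ⟪lam₀, Y n ω⟫) ∂P) < Λ lam₀ := by
  have hline : HasDerivAt (fun t : ℝ => Λ (lam₀ + t • v)) ⟪x₀, v⟫ 0 := by
    simpa [HasLineDerivAt] using hx₀.hasFDerivAt.hasLineDerivAt v
  have hslope : ∀ᶠ t : ℝ in 𝓝[>] 0,
      t⁻¹ • (Λ (lam₀ + (0 + t) • v) - Λ (lam₀ + (0 : ℝ) • v)) < ⟪x₀, v⟫ + 1 :=
    hline.tendsto_slope_zero_right.eventually (gt_mem_nhds (by linarith))
  have hup' : ∀ᶠ t : ℝ in 𝓝[>] 0,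
      expGrowthSup (expMoment P Y (lam₀ + t • v)) ≤ Λ (lam₀ + t • v) := by
    have hcont : Tendsto (fun t : ℝ => lam₀ + t • v) (𝓝 0) (𝓝 lam₀) :=
      Continuous.tendsto' (by fun_prop) _ _ (by simp)
    exact (hcont.eventually hup).filter_mono nhdsWithin_le_nhds
  obtain ⟨t, ⟨hslope, hup⟩, ht⟩ := ((hslope.and hup').and self_mem_nhdsWithin).exists
  replace ht : 0 < t := ht
  have hgap : Λ (lam₀ + t • v) < t * (⟪v, x₀⟫ + 1) + Λ lam₀ := by
    rw [smul_eq_mul, inv_mul_lt_iff₀ ht, zero_add, zero_smul, add_zero, real_inner_comm] at hslope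
    linarith
  by_contra! h
  have hle : ((t * (⟪v, x₀⟫ + 1) + Λ lam₀ : ℝ) : EReal) ≤ Λ (lam₀ + t • v) := by
    rw [EReal.coe_add]
    exact (add_le_add_right h _).trans
      ((add_expGrowthSup_setLIntegral_halfSpace_le hY lam₀ v x₀ ht.le).trans hup)
  exact absurd (EReal.coe_le_coe_iff.1 hle) hgap.not_ge

lemma expGrowthSup_setLIntegral_compl_closedBall_lt (hY : ∀ n, Measurable (Y n))
    (hup : ∀ᶠ lam in 𝓝 lam₀, expGrowthSup (expMoment P Y lam) ≤ Λ lam)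
    (hx₀ : HasGradientAt Λ x₀ lam₀) {ε : ℝ} (hε : 0 < ε) :
    expGrowthSup (fun n => ∫⁻ ω in {ω | (n : ℝ)⁻¹ • Y n ω ∈ Metric.closedBall x₀ ε}ᶜ,
      ENNReal.ofReal (exp ⟪lam₀, Y n ω⟫) ∂P) < Λ lam₀ := by
  obtain ⟨s, hs⟩ := exists_finset_forall_lt_norm_one_lt_inner (V := V) hε
  set I : V → ℕ → ℝ≥0∞ := fun v n => ∫⁻ ω in {ω | 1 < ⟪v, (n : ℝ)⁻¹ • Y n ω - x₀⟫},
    ENNReal.ofReal (exp ⟪lam₀, Y n ω⟫) ∂P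
  have hcover : ∀ n : ℕ, ({ω | (n : ℝ)⁻¹ • Y n ω ∈ Metric.closedBall x₀ ε} : Set Ω)ᶜ ⊆
      ⋃ v ∈ s, {ω | 1 < ⟪v, (n : ℝ)⁻¹ • Y n ω - x₀⟫} := fun n ω hω => by
    obtain ⟨v, hv, h⟩ := hs ((n : ℝ)⁻¹ • Y n ω - x₀) (by
      simpa [dist_eq_norm] using hω)
    exact mem_biUnion hv h
  have hsum : expGrowthSup (∑ v ∈ s, I v) < Λ lam₀ := by
    rw [expGrowthSup_sum, ← Finset.sup_eq_iSup]
    exact (Finset.sup_lt_iff (EReal.bot_lt_coe _)).2 fun v _ =>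
      expGrowthSup_setLIntegral_halfSpace_lt hY hup hx₀ v
  refine (expGrowthSup_monotone fun n => ?_).trans_lt hsum
  rw [Finset.sum_apply]
  exact (lintegral_mono_set (hcover n)).trans (lintegral_biUnion_finset_le s _ _)

lemma le_add_expGrowthInf_measure_closedBall (hY : ∀ n, Measurable (Y n))
    (hup : ∀ᶠ lam in 𝓝 lam₀, expGrowthSup (expMoment P Y lam) ≤ Λ lam)
    (hlow : Λ lam₀ ≤ expGrowthInf (expMoment P Y lam₀))
    (hx₀ : HasGradientAt Λ x₀ lam₀) {ε : ℝ} (hε : 0 < ε) :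
    (Λ lam₀ : EReal) ≤ ((⟪lam₀, x₀⟫ + ‖lam₀‖ * ε : ℝ) : EReal) +
      expGrowthInf (fun n => P {ω | (n : ℝ)⁻¹ • Y n ω ∈ Metric.closedBall x₀ ε}) := by
  set s : ℕ → Set Ω := fun n => {ω | (n : ℝ)⁻¹ • Y n ω ∈ Metric.closedBall x₀ ε}
  have hs : ∀ n, MeasurableSet (s n) := fun n => measurableSet_inv_smul_mem_closedBall (hY n) n _ _
  set I : (ℕ → Set Ω) → ℕ → ℝ≥0∞ := fun s n => ∫⁻ ω in s n, ENNReal.ofReal (exp ⟪lam₀, Y n ω⟫) ∂P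
  have hsplit : expMoment P Y lam₀ = I s + I sᶜ :=
    funext fun n => (lintegral_add_compl _ (hs n)).symm
  rw [hsplit] at hlow
  have hball : Λ lam₀ ≤ expGrowthInf (I s) :=
    (le_max_iff.1 (hlow.trans expGrowthInf_add_le)).resolve_right
      (expGrowthSup_setLIntegral_compl_closedBall_lt hY hup hx₀ hε).not_ge
  refine hball.trans (expGrowthInf_le_add_of_le_exp_mul ?_)
  filter_upwards [eventually_gt_atTop 0] with n hn
  rw [← setLIntegral_const]
  refine setLIntegral_mono' (hs n) fun ω hω => ENNReal.ofReal_le_ofReal (exp_le_exp.2 ?_)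
  linarith [(abs_le.1 (abs_inner_sub_le_of_inv_smul_mem_closedBall hn lam₀ hω)).2]

lemma le_expGrowthInf_measure_closedBall (hY : ∀ n, Measurable (Y n))
    (hup : ∀ᶠ lam in 𝓝 lam₀, expGrowthSup (expMoment P Y lam) ≤ Λ lam)
    (hlow : Λ lam₀ ≤ expGrowthInf (expMoment P Y lam₀))
    (hx₀ : HasGradientAt Λ x₀ lam₀) {ε : ℝ} (hε : 0 < ε) :
    ((Λ lam₀ - ⟪lam₀, x₀⟫ : ℝ) : EReal) ≤
      expGrowthInf (fun n => P {ω | (n : ℝ)⁻¹ • Y n ω ∈ Metric.closedBall x₀ ε}) := by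
  have hlim : Tendsto (fun r : ℝ => ((Λ lam₀ - (⟪lam₀, x₀⟫ + ‖lam₀‖ * r) : ℝ) : EReal)) (𝓝[>] 0)
      (𝓝 ((Λ lam₀ - ⟪lam₀, x₀⟫ : ℝ) : EReal)) :=
    ((continuous_coe_real_ereal.comp (by fun_prop)).tendsto' 0 _ (by simp)).mono_left
      nhdsWithin_le_nhds
  refine le_of_tendsto hlim ?_
  filter_upwards [Ioc_mem_nhdsGT hε] with r hr
  rw [EReal.coe_sub]
  refine (EReal.sub_le_of_le_add' <|
    le_add_expGrowthInf_measure_closedBall hY hup hlow hx₀ hr.1).trans ?_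
  exact expGrowthInf_monotone fun n => measure_mono fun ω hω =>
    Metric.closedBall_subset_closedBall hr.2 hω

lemma inner_sub_le_of_expGrowth (hY : ∀ n, Measurable (Y n))
    (hup : ∀ᶠ lam in 𝓝 lam₀, expGrowthSup (expMoment P Y lam) ≤ Λ lam)
    (hlow : Λ lam₀ ≤ expGrowthInf (expMoment P Y lam₀))
    (hx₀ : HasGradientAt Λ x₀ lam₀) {lam : V} (hlam : expGrowthSup (expMoment P Y lam) ≤ Λ lam) :
    ⟪lam, x₀⟫ - Λ lam ≤ ⟪lam₀, x₀⟫ - Λ lam₀ := by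
  have hball : ∀ ε > 0, ⟪lam, x₀⟫ - ‖lam‖ * ε + (Λ lam₀ - ⟪lam₀, x₀⟫) ≤ Λ lam := fun ε hε => by
    rw [← EReal.coe_le_coe_iff, EReal.coe_add]
    calc _ ≤ _ := by gcongr; exact (le_expGrowthInf_measure_closedBall hY hup hlow hx₀ hε).trans
                      expGrowthInf_le_expGrowthSup
      _ ≤ _ := (add_expGrowthSup_measure_closedBall_le hY lam x₀ ε).trans hlam
  have hlim : Tendsto (fun ε : ℝ => ⟪lam, x₀⟫ - ‖lam‖ * ε + (Λ lam₀ - ⟪lam₀, x₀⟫)) (𝓝[>] 0)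
      (𝓝 (⟪lam, x₀⟫ + (Λ lam₀ - ⟪lam₀, x₀⟫))) :=
    (Continuous.tendsto' (by fun_prop) 0 _ (by simp)).mono_left nhdsWithin_le_nhds
  linarith [le_of_tendsto hlim (eventually_mem_nhdsWithin.mono hball)]

lemma iSup_inner_sub_eq (hY : ∀ n, Measurable (Y n)) {D : Set V} (hD : D ∈ 𝓝 lam₀)
    (hup : ∀ lam ∈ D, expGrowthSup (expMoment P Y lam) ≤ Λ lam)
    (hlow : Λ lam₀ ≤ expGrowthInf (expMoment P Y lam₀)) (hx₀ : HasGradientAt Λ x₀ lam₀) :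
    ⨆ lam : D, (⟪(lam : V), x₀⟫ - Λ lam) = ⟪lam₀, x₀⟫ - Λ lam₀ := by
  have hle : ∀ lam : D, ⟪(lam : V), x₀⟫ - Λ lam ≤ ⟪lam₀, x₀⟫ - Λ lam₀ := fun lam =>
    inner_sub_le_of_expGrowth hY (eventually_of_mem hD hup) hlow hx₀ (hup lam lam.2)
  have : Nonempty D := ⟨⟨lam₀, mem_of_mem_nhds hD⟩⟩
  exact le_antisymm (ciSup_le hle)
    (le_ciSup (f := fun lam : D => ⟪(lam : V), x₀⟫ - Λ lam) ⟨_, forall_mem_range.2 hle⟩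
      ⟨lam₀, mem_of_mem_nhds hD⟩)

end LocalGartnerEllis

section MixingCoefficients

/-- The strong mixing coefficient `α(𝒰, 𝒱)` of two σ-algebras. -/
noncomputable def alphaMixing {Ω : Type*} [MeasurableSpace Ω] (P : Measure Ω)
    (𝒰 𝒱 : MeasurableSpace Ω) : ℝ :=
  sSup {r : ℝ | ∃ A B : Set Ω, MeasurableSet[𝒰] A ∧ MeasurableSet[𝒱] B ∧
    r = |(P A).toReal * (P B).toReal - (P (A ∩ B)).toReal|}

/-- The σ-algebra generated by the coordinates `X j`, `j ∈ J`, of a process `X`. -/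
abbrev coordSigma {Ω E : Type*} [MeasurableSpace E] (X : Ω → ℕ → E) (J : Set ℕ) :
    MeasurableSpace Ω :=
  ⨆ j ∈ J, MeasurableSpace.comap (fun ω => X ω j) inferInstance

/-- The Rosenblatt coefficients `α_{X,m}` of a process `X`. -/
noncomputable def rosenblattCoeff {Ω E : Type*} [MeasurableSpace Ω] [MeasurableSpace E]
    (P : Measure Ω) (X : Ω → ℕ → E) : ℕ → ℝ
  | 0 => 1 / 2
  | m + 1 => ⨆ i, alphaMixing P (coordSigma X (Iic i)) (coordSigma X (Ici (i + (m + 1))))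

variable {Ω : Type*} {𝒰 𝒱 𝒲 mΩ : MeasurableSpace Ω} {P : Measure Ω}

lemma abs_measureReal_mul_sub_inter_le_quarter [IsProbabilityMeasure P] (A : Set Ω) {B : Set Ω}
    (hB : MeasurableSet B) : |P.real A * P.real B - P.real (A ∩ B)| ≤ 1 / 4 := by
  have hA : P.real (A ∩ B) + P.real (A \ B) = P.real A := measureReal_inter_add_sdiff hB
  have hdiff : P.real (A \ B) ≤ 1 - P.real B := by
    rw [← probReal_compl_eq_one_sub hB]
    exact measureReal_mono fun ω hω => hω.2
  have hinter : P.real (A ∩ B) ≤ P.real B := measureReal_mono inter_subset_right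
  have hB1 : P.real B ≤ 1 := measureReal_le_one
  have hnonneg : ∀ s : Set Ω, 0 ≤ P.real s := fun s => measureReal_nonneg
  rw [abs_le, ← hA]
  constructor <;>
    nlinarith [sq_nonneg (P.real B - 1 / 2), hnonneg B, hnonneg (A ∩ B), hnonneg (A \ B)]

lemma alphaMixing_le_quarter [IsProbabilityMeasure P] (h𝒱 : 𝒱 ≤ mΩ) :
    alphaMixing P 𝒰 𝒱 ≤ 1 / 4 := by
  refine Real.sSup_le ?_ (by norm_num)
  rintro _ ⟨A, B, -, hB, rfl⟩
  exact abs_measureReal_mul_sub_inter_le_quarter A (h𝒱 B hB)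

lemma abs_measureReal_mul_sub_inter_le_alphaMixing [IsProbabilityMeasure P] (h𝒱 : 𝒱 ≤ mΩ)
    {A B : Set Ω} (hA : MeasurableSet[𝒰] A) (hB : MeasurableSet[𝒱] B) :
    |P.real A * P.real B - P.real (A ∩ B)| ≤ alphaMixing P 𝒰 𝒱 := by
  refine le_csSup ⟨1 / 4, ?_⟩ ⟨A, B, hA, hB, rfl⟩
  rintro _ ⟨A, B, -, hB, rfl⟩
  exact abs_measureReal_mul_sub_inter_le_quarter A (h𝒱 B hB)

lemma alphaMixing_nonneg : 0 ≤ alphaMixing P 𝒰 𝒱 :=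
  Real.sSup_nonneg (by rintro _ ⟨A, B, -, -, rfl⟩; exact abs_nonneg _)

lemma alphaMixing_mono_right [IsProbabilityMeasure P] (h𝒱𝒲 : 𝒱 ≤ 𝒲) (h𝒲 : 𝒲 ≤ mΩ) :
    alphaMixing P 𝒰 𝒱 ≤ alphaMixing P 𝒰 𝒲 := by
  refine Real.sSup_le ?_ alphaMixing_nonneg
  rintro _ ⟨A, B, hA, hB, rfl⟩
  exact abs_measureReal_mul_sub_inter_le_alphaMixing h𝒲 hA (h𝒱𝒲 B hB)

end MixingCoefficients

section CoordinateProcess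

variable {Ω E : Type*} [MeasurableSpace E] {X : Ω → ℕ → E}

lemma coordSigma_mono {J J' : Set ℕ} (h : J ⊆ J') : coordSigma X J ≤ coordSigma X J' :=
  biSup_mono h

lemma measurable_coordSigma {J : Set ℕ} {j : ℕ} (hj : j ∈ J) :
    Measurable[coordSigma X J] fun ω => X ω j :=
  (comap_measurable fun ω => X ω j).mono (le_iSup₂_of_le j hj le_rfl) le_rfl

variable {mΩ : MeasurableSpace Ω} {P : Measure Ω}

lemma coordSigma_le (hX : Measurable X) (J : Set ℕ) : coordSigma X J ≤ mΩ :=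
  iSup₂_le fun j _ => ((measurable_pi_apply j).comp hX).comap_le

lemma rosenblattCoeff_nonneg (m : ℕ) : 0 ≤ rosenblattCoeff P X m := by
  cases m with
  | zero => norm_num [rosenblattCoeff]
  | succ m => exact Real.iSup_nonneg fun i => alphaMixing_nonneg

variable [IsProbabilityMeasure P]

lemma bddAbove_range_alphaMixing_coordSigma (hX : Measurable X) (𝒰 : ℕ → MeasurableSpace Ω)
    (J : ℕ → Set ℕ) : BddAbove (range fun i => alphaMixing P (𝒰 i) (coordSigma X (J i))) :=
  ⟨1 / 4, forall_mem_range.2 fun i => alphaMixing_le_quarter (coordSigma_le hX (J i))⟩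

lemma rosenblattCoeff_le_one (hX : Measurable X) (m : ℕ) : rosenblattCoeff P X m ≤ 1 := by
  cases m with
  | zero => norm_num [rosenblattCoeff]
  | succ m =>
    exact ciSup_le fun i => (alphaMixing_le_quarter (coordSigma_le hX _)).trans (by norm_num)

lemma antitone_rosenblattCoeff (hX : Measurable X) : Antitone (rosenblattCoeff P X) := by
  refine antitone_nat_of_succ_le fun m => ?_
  cases m with
  | zero =>
    exact ciSup_le fun i => (alphaMixing_le_quarter (coordSigma_le hX _)).trans
      (by norm_num [rosenblattCoeff])
  | succ m =>
    exact ciSup_mono (bddAbove_range_alphaMixing_coordSigma hX _ _) fun i =>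
      alphaMixing_mono_right (coordSigma_mono (Ici_subset_Ici.2 (by omega))) (coordSigma_le hX _)

lemma abs_measureReal_mul_sub_inter_le_rosenblattCoeff (hX : Measurable X) {i m : ℕ}
    {A B : Set Ω} (hA : MeasurableSet[coordSigma X (Iic i)] A)
    (hB : MeasurableSet[coordSigma X (Ici (i + m))] B) :
    |P.real A * P.real B - P.real (A ∩ B)| ≤ rosenblattCoeff P X m := by
  cases m with
  | zero =>
    exact (abs_measureReal_mul_sub_inter_le_quarter A (coordSigma_le hX _ _ hB)).trans
      (by norm_num [rosenblattCoeff])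
  | succ m =>
    exact (abs_measureReal_mul_sub_inter_le_alphaMixing (coordSigma_le hX _) hA hB).trans
      (le_ciSup (bddAbove_range_alphaMixing_coordSigma hX (fun i => coordSigma X (Iic i))
        fun i => Ici (i + (m + 1))) i)

end CoordinateProcess

section GeneralizedInverse

/-- The generalized inverse `u ↦ inf {m | α m ≤ u}` of a sequence `α`, with value `∞` where no term
of the sequence is `≤ u`. -/
noncomputable def generalizedInverse (α : ℕ → ℝ) (u : ℝ) : ℝ≥0∞ :=
  sInf ((fun m : ℕ => (m : ℝ≥0∞)) '' {m | α m ≤ u})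

lemma le_generalizedInverse_of_lt {α : ℕ → ℝ} (hα : Antitone α) {m : ℕ} {u : ℝ} (h : u < α m) :
    (m : ℝ≥0∞) ≤ generalizedInverse α u := by
  refine le_sInf ?_
  rintro _ ⟨l, hl, rfl⟩
  by_contra! hlm
  exact (h.trans_le (hα (Nat.cast_lt.1 hlm).le)).not_ge hl

lemma rpow_mul_le_lintegral_generalizedInverse {α : ℕ → ℝ} (hα : Antitone α) {m : ℕ}
    (h1 : α m ≤ 1) {h : ℝ} (hh : 0 ≤ h) :
    (m : ℝ≥0∞) ^ h * ENNReal.ofReal (α m) ≤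
      ∫⁻ u in Ioc (0 : ℝ) 1, generalizedInverse α u ^ h :=
  calc (m : ℝ≥0∞) ^ h * ENNReal.ofReal (α m) = ∫⁻ _ in Ioo 0 (α m), (m : ℝ≥0∞) ^ h := by simp
    _ ≤ ∫⁻ u in Ioo 0 (α m), generalizedInverse α u ^ h :=
        setLIntegral_mono' measurableSet_Ioo fun u hu =>
          ENNReal.rpow_le_rpow (le_generalizedInverse_of_lt hα hu.2) hh
    _ ≤ ∫⁻ u in Ioc (0 : ℝ) 1, generalizedInverse α u ^ h :=
        lintegral_mono_set fun u hu => ⟨hu.1, hu.2.le.trans h1⟩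

lemma summable_rpow_of_lintegral_generalizedInverse_lt_top {α : ℕ → ℝ} (hα : Antitone α)
    (h0 : ∀ m, 0 ≤ α m) (h1 : ∀ m, α m ≤ 1) {θ : ℝ} (hθ : 0 < θ)
    (hint : ∫⁻ u in Ioc (0 : ℝ) 1, generalizedInverse α u ^ (2 / θ) < ∞) :
    Summable fun m => α m ^ θ := by
  set C : ℝ := (∫⁻ u in Ioc (0 : ℝ) 1, generalizedInverse α u ^ (2 / θ)).toReal
  have hC : ∀ m : ℕ, (m : ℝ) ^ (2 / θ) * α m ≤ C := fun m => by
    have h := ENNReal.toReal_mono hint.ne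
      (rpow_mul_le_lintegral_generalizedInverse hα (h1 m) (h := 2 / θ) (by positivity))
    rwa [ENNReal.toReal_mul, ← ENNReal.toReal_rpow, ENNReal.toReal_natCast,
      ENNReal.toReal_ofReal (h0 m)] at h
  refine Summable.of_norm_bounded_eventually_nat
    ((Real.summable_one_div_nat_pow.2 one_lt_two).mul_left (C ^ θ)) ?_
  filter_upwards [eventually_gt_atTop 0] with m hm
  have hm' : (0 : ℝ) < m := by exact_mod_cast hm
  have hpow := rpow_le_rpow (mul_nonneg (by positivity) (h0 m)) (hC m) hθ.le
  rw [mul_rpow (by positivity) (h0 m), ← rpow_mul hm'.le, div_mul_cancel₀ _ hθ.ne',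
    rpow_two] at hpow
  rw [norm_of_nonneg (rpow_nonneg (h0 m) _), mul_one_div, le_div_iff₀ (by positivity)]
  linarith

end GeneralizedInverse

section Blocks

variable {Ω E : Type*} [MeasurableSpace E] {X : Ω → ℕ → E}

/-- The `l`-th power of the one-sided shift. -/
def seqShift {E : Type*} (l : ℕ) (z : ℕ → E) : ℕ → E := fun i => z (i + l)

/-- Replacement of the coordinates of index at least `N` by the constant `c`; a function of
`truncSeq c N z` depends only on the first `N` coordinates of `z`. -/
def truncSeq {E : Type*} (c : E) (N : ℕ) (z : ℕ → E) : ℕ → E := fun i => if i < N then z i else c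

lemma measurable_seqShift (l : ℕ) : Measurable (seqShift l : (ℕ → E) → ℕ → E) :=
  measurable_pi_lambda _ fun i => measurable_pi_apply (i + l)

lemma measurable_truncSeq (c : E) (N : ℕ) : Measurable (truncSeq c N) :=
  measurable_pi_lambda _ fun i =>
    Measurable.ite (MeasurableSet.const (i < N)) (measurable_pi_apply i) measurable_const

lemma measurable_truncSeq_seqShift_coordSigma (c : E) {N l : ℕ} {J : Set ℕ}
    (hJ : ∀ i < N, i + l ∈ J) :
    Measurable[coordSigma X J] fun ω => truncSeq c N (seqShift l (X ω)) := by
  refine @measurable_pi_lambda _ _ _ (coordSigma X J) _ _ fun i => ?_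
  by_cases hi : i < N
  · simpa only [truncSeq, seqShift, hi, if_true] using measurable_coordSigma (hJ i hi)
  · simpa only [truncSeq, hi, if_false] using @measurable_const _ _ _ (coordSigma X J) c

variable [MeasurableSpace Ω] {P : Measure Ω}

lemma identDistrib_seqShift (hX : Measurable X)
    (hstat : P.map (fun ω => seqShift 1 (X ω)) = P.map X) (l : ℕ) :
    IdentDistrib (fun ω => seqShift l (X ω)) X P P := by
  refine ⟨((measurable_seqShift l).comp hX).aemeasurable, hX.aemeasurable, ?_⟩
  induction l with
  | zero => rfl
  | succ l ih =>
    calc P.map (fun ω => seqShift (l + 1) (X ω))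
        = (P.map fun ω => seqShift 1 (X ω)).map (seqShift l) := by
          exact (Measure.map_map (measurable_seqShift l) ((measurable_seqShift 1).comp hX)).symm
      _ = P.map X := by
          rw [hstat, Measure.map_map (measurable_seqShift l) hX]
          exact ih

variable [IsProbabilityMeasure P]

lemma abs_measureReal_block_mul_sub_inter_le_rosenblattCoeff (hX : Measurable X) (c : E) (r : ℕ)
    {n : ℕ} (hn : 0 < n) {B : Set (ℕ → E)} (hB : MeasurableSet B) {i j : ℕ} (hij : i ≤ j) :
    |P.real {ω | truncSeq c (r * n) (seqShift (i * n) (X ω)) ∈ B} *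
        P.real {ω | truncSeq c (r * n) (seqShift (j * n) (X ω)) ∈ B} -
        P.real ({ω | truncSeq c (r * n) (seqShift (i * n) (X ω)) ∈ B} ∩
          {ω | truncSeq c (r * n) (seqShift (j * n) (X ω)) ∈ B})| ≤
      rosenblattCoeff P X (j - i - r) := by
  rcases Nat.eq_zero_or_pos (j - i - r) with h0 | hpos
  · have hmeas := ((measurable_truncSeq c (r * n)).comp ((measurable_seqShift (j * n)).comp hX)) hB
    rw [h0]
    exact (abs_measureReal_mul_sub_inter_le_quarter _ hmeas).trans (by norm_num [rosenblattCoeff])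
  · obtain ⟨m, rfl⟩ : ∃ m, j = i + r + m := ⟨j - i - r, by omega⟩
    have hm : m ≤ m * n := Nat.le_mul_of_pos_right m hn
    rw [show i + r + m - i - r = m by omega]
    refine abs_measureReal_mul_sub_inter_le_rosenblattCoeff hX (i := (i + r) * n)
      (measurable_truncSeq_seqShift_coordSigma c (fun a ha => ?_) hB)
      (measurable_truncSeq_seqShift_coordSigma c (fun a _ => ?_) hB)
    · rw [mem_Iic, add_mul]
      omega
    · rw [mem_Ici, add_mul (i + r) m n]
      omega

end Blocks

section Chebyshev

lemma sum_comp_natDist_le_two_mul_tsum {b : ℕ → ℝ} (hb0 : ∀ m, 0 ≤ b m) (hb : Summable b) (i : ℕ)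
    (s : Finset ℕ) : ∑ j ∈ s, b (Nat.dist i j) ≤ 2 * ∑' m, b m := by
  have hinj : ∀ t : Finset ℕ, InjOn (Nat.dist i) t → ∑ j ∈ t, b (Nat.dist i j) ≤ ∑' m, b m :=
    fun t ht => by
      rw [← Finset.sum_image ht]
      exact hb.sum_le_tsum _ fun m _ => hb0 m
  rw [← Finset.sum_filter_add_sum_filter_not s (i ≤ ·), two_mul]
  refine add_le_add (hinj _ ?_) (hinj _ ?_) <;>
  · intro j hj l hl hjl
    simp only [Finset.coe_filter, Set.mem_ofPred_eq, Nat.dist] at hj hl hjl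
    omega

variable {Ω : Type*} [MeasurableSpace Ω] {P : Measure Ω}

lemma variance_sum_range_le [IsFiniteMeasure P] {f : ℕ → Ω → ℝ} (hf : ∀ i, MemLp (f i) 2 P)
    {b : ℕ → ℝ} (hb0 : ∀ m, 0 ≤ b m) (hb : Summable b)
    (hcov : ∀ i j, cov[f i, f j; P] ≤ b (Nat.dist i j)) (k : ℕ) :
    Var[fun ω => ∑ i ∈ Finset.range k, f i ω; P] ≤ k * (2 * ∑' m, b m) :=
  calc Var[fun ω => ∑ i ∈ Finset.range k, f i ω; P]
      = ∑ i ∈ Finset.range k, ∑ j ∈ Finset.range k, cov[f i, f j; P] :=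
        variance_fun_sum' fun i _ => hf i
    _ ≤ ∑ i ∈ Finset.range k, 2 * ∑' m, b m :=
        Finset.sum_le_sum fun i _ => (Finset.sum_le_sum fun j _ => hcov i j).trans
          (sum_comp_natDist_le_two_mul_tsum hb0 hb i _)
    _ = k * (2 * ∑' m, b m) := by simp

lemma covariance_indicator_one [IsProbabilityMeasure P] {A B : Set Ω} (hA : MeasurableSet A)
    (hB : MeasurableSet B) :
    cov[A.indicator (1 : Ω → ℝ), B.indicator (1 : Ω → ℝ); P] =
      P.real (A ∩ B) - P.real A * P.real B := by
  have hmemLp : ∀ {s : Set Ω}, MeasurableSet s → MemLp (s.indicator (1 : Ω → ℝ)) 2 P :=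
    fun hs => (memLp_const 1).indicator hs
  rw [covariance_eq_sub (hmemLp hA) (hmemLp hB), ← inter_indicator_one, integral_indicator_one hA,
    integral_indicator_one hB, integral_indicator_one (hA.inter hB)]

end Chebyshev

section EmpiricalMeasure

/-- The empirical measure `k⁻¹ ∑_{j<k} δ_{Z j}` of the first `k` terms of a sequence; it is the zero
measure when `k = 0`. -/
noncomputable def empiricalMeasure {β : Type*} [MeasurableSpace β] (k : ℕ) (Z : ℕ → β) :
    Measure β :=
  (k : ℝ≥0∞)⁻¹ • ∑ j ∈ Finset.range k, Measure.dirac (Z j)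

variable {β : Type*} [MeasurableSpace β]

lemma empiricalMeasure_eq_sum_Icc (k : ℕ) (Z : ℕ → β) :
    empiricalMeasure k Z = (k : ℝ≥0∞)⁻¹ • ∑ j ∈ Finset.Icc 1 k, Measure.dirac (Z (j - 1)) := by
  rw [← Finset.Ico_succ_right_eq_Icc, Finset.sum_Ico_eq_sum_range]
  simp only [empiricalMeasure, Order.succ_eq_add_one, Nat.add_sub_cancel, Nat.add_sub_cancel_left]

lemma empiricalMeasure_apply (k : ℕ) (Z : ℕ → β) {s : Set β} (hs : MeasurableSet s) :
    empiricalMeasure k Z s = (k : ℝ≥0∞)⁻¹ * ∑ j ∈ Finset.range k, s.indicator 1 (Z j) := by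
  simp only [empiricalMeasure, Measure.smul_apply, Measure.finsetSum_apply,
    Measure.dirac_apply' _ hs, smul_eq_mul]

lemma empiricalMeasure_apply_eq_ofReal {k : ℕ} (hk : 0 < k) (Z : ℕ → β) {s : Set β}
    (hs : MeasurableSet s) :
    empiricalMeasure k Z s =
      ENNReal.ofReal ((k : ℝ)⁻¹ * ∑ j ∈ Finset.range k, s.indicator 1 (Z j)) := by
  have hind : ∀ x, (s.indicator 1 x : ℝ≥0∞) = ENNReal.ofReal (s.indicator 1 x) := fun x => by
    by_cases hx : x ∈ s <;> simp [hx]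
  rw [empiricalMeasure_apply k Z hs, ENNReal.ofReal_mul (by positivity),
    ENNReal.ofReal_inv_of_pos (by exact_mod_cast hk), ENNReal.ofReal_natCast,
    ENNReal.ofReal_sum_of_nonneg fun j _ =>
      indicator_nonneg (f := (1 : β → ℝ)) (fun _ _ => zero_le_one) _]
  simp only [hind]

lemma empiricalMeasure_le_empiricalMeasure {γ : Type*} [MeasurableSpace γ] (k : ℕ) {Z : ℕ → β}
    {W : ℕ → γ} {s : Set β} {t : Set γ} (hs : MeasurableSet s) (ht : MeasurableSet t)
    (h : ∀ j, Z j ∈ s → W j ∈ t) : empiricalMeasure k Z s ≤ empiricalMeasure k W t := by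
  rw [empiricalMeasure_apply k Z hs, empiricalMeasure_apply k W ht]
  gcongr with j
  by_cases hj : Z j ∈ s
  · simp [hj, h j hj]
  · simp [hj]

variable {Ω : Type*} [MeasurableSpace Ω] {P : Measure Ω} {Z : ℕ → Ω → β} {s : Set β}

lemma measurable_empiricalMeasure_apply (k : ℕ) (hZ : ∀ j, Measurable (Z j))
    (hs : MeasurableSet s) : Measurable fun ω => empiricalMeasure k (fun j => Z j ω) s := by
  simp only [empiricalMeasure_apply k _ hs]
  exact measurable_const.mul
    (Finset.measurable_fun_sum _ fun j _ => (measurable_one.indicator hs).comp (hZ j))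

lemma lintegral_empiricalMeasure_le (k : ℕ) (hZ : ∀ j, Measurable (Z j)) (hs : MeasurableSet s)
    {p : ℝ≥0∞} (hp : ∀ j, P (Z j ⁻¹' s) = p) :
    ∫⁻ ω, empiricalMeasure k (fun j => Z j ω) s ∂P ≤ p := by
  have hmeas : ∀ j, Measurable fun ω => (s.indicator 1 (Z j ω) : ℝ≥0∞) := fun j =>
    (measurable_one.indicator hs).comp (hZ j)
  have hmean : ∀ j, ∫⁻ ω, s.indicator 1 (Z j ω) ∂P = p := fun j =>
    (lintegral_indicator_one (hZ j hs)).trans (hp j)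
  simp only [empiricalMeasure_apply k _ hs]
  rw [lintegral_const_mul _ (Finset.measurable_fun_sum _ fun j _ => hmeas j),
    lintegral_finsetSum _ fun j _ => hmeas j]
  simp only [hmean, Finset.sum_const, Finset.card_range, nsmul_eq_mul]
  rw [← mul_assoc]
  exact mul_le_of_le_one_left' (ENNReal.inv_mul_le_one _)

lemma measure_empiricalMeasure_le_half_le [IsProbabilityMeasure P] (hZ : ∀ j, Measurable (Z j))
    (hs : MeasurableSet s) {p : ℝ} (hp : 0 < p) (hZp : ∀ j, P.real (Z j ⁻¹' s) = p) {b : ℕ → ℝ}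
    (hb0 : ∀ m, 0 ≤ b m) (hb : Summable b)
    (hcov : ∀ i j, P.real (Z i ⁻¹' s ∩ Z j ⁻¹' s) - p * p ≤ b (Nat.dist i j)) {k : ℕ}
    (hk : 0 < k) :
    P {ω | empiricalMeasure k (fun j => Z j ω) s ≤ ENNReal.ofReal (p / 2)} ≤
      ENNReal.ofReal (8 * (∑' m, b m) / (p ^ 2 * k)) := by
  have hk' : (0 : ℝ) < k := by exact_mod_cast hk
  set f : ℕ → Ω → ℝ := fun j => (Z j ⁻¹' s).indicator 1
  set N : Ω → ℝ := fun ω => ∑ j ∈ Finset.range k, f j ω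
  have hf : ∀ j, MemLp (f j) 2 P := fun j => (memLp_const 1).indicator (hZ j hs)
  have hmean : ∫ ω, N ω ∂P = k * p := by
    rw [integral_finsetSum _ fun j _ => (hf j).integrable one_le_two]
    simp only [f, integral_indicator_one (hZ _ hs), hZp, Finset.sum_const, Finset.card_range,
      nsmul_eq_mul]
  have hvar : Var[N; P] ≤ k * (2 * ∑' m, b m) :=
    variance_sum_range_le hf hb0 hb (fun i j => by
      rw [covariance_indicator_one (hZ i hs) (hZ j hs), hZp, hZp]
      exact hcov i j) k
  calc P {ω | empiricalMeasure k (fun j => Z j ω) s ≤ ENNReal.ofReal (p / 2)}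
      ≤ P {ω | k * p / 2 ≤ |N ω - ∫ ω', N ω' ∂P|} := by
        refine measure_mono fun ω hω => ?_
        rw [Set.mem_ofPred_eq, empiricalMeasure_apply_eq_ofReal hk _ hs,
          ENNReal.ofReal_le_ofReal_iff (by positivity), inv_mul_le_iff₀ hk'] at hω
        have hN : N ω ≤ k * (p / 2) := hω
        rw [Set.mem_ofPred_eq, hmean]
        exact le_abs.2 (Or.inr (by linarith))
    _ ≤ ENNReal.ofReal (Var[N; P] / (k * p / 2) ^ 2) :=
        meas_ge_le_variance_div_sq (memLp_finsetSum _ fun j _ => hf j) (by positivity)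
    _ ≤ ENNReal.ofReal (k * (2 * ∑' m, b m) / (k * p / 2) ^ 2) := by gcongr
    _ = ENNReal.ofReal (8 * (∑' m, b m) / (p ^ 2 * k)) := by
        congr 1
        field_simp
        ring

end EmpiricalMeasure

section BlockEmpiricalMeasure

variable {Ω : Type*} [MeasurableSpace Ω] {P : Measure Ω} [IsProbabilityMeasure P]
  {E : Type*} [MeasurableSpace E] {X : Ω → ℕ → E}

lemma le_rpow_mul_rpow_of_le_of_le {x p a θ : ℝ} (hp : 0 ≤ p) (ha : 0 ≤ a) (hθ0 : 0 ≤ θ)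
    (hθ1 : θ ≤ 1) (hxp : x ≤ p) (hxa : x ≤ a) : x ≤ p ^ (1 - θ) * a ^ θ := by
  rcases le_or_gt x 0 with hx | hx
  · exact hx.trans (by positivity)
  · calc x = x ^ (1 - θ) * x ^ θ := by rw [← rpow_add hx, sub_add_cancel, rpow_one]
      _ ≤ p ^ (1 - θ) * a ^ θ := by gcongr

lemma measureReal_block_inter_sub_le (hX : Measurable X) (c : E) (r : ℕ)
    {n : ℕ} (hn : 0 < n) {B : Set (ℕ → E)} (hB : MeasurableSet B) {p : ℝ}
    (hp : ∀ j, P.real {ω | truncSeq c (r * n) (seqShift (j * n) (X ω)) ∈ B} = p) (i j : ℕ) :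
    P.real ({ω | truncSeq c (r * n) (seqShift (i * n) (X ω)) ∈ B} ∩
        {ω | truncSeq c (r * n) (seqShift (j * n) (X ω)) ∈ B}) - p * p ≤
      rosenblattCoeff P X (Nat.dist i j - r) := by
  wlog hij : i ≤ j generalizing i j
  · rw [inter_comm, Nat.dist_comm]
    exact this j i (le_of_not_ge hij)
  · have h := abs_measureReal_block_mul_sub_inter_le_rosenblattCoeff (P := P) hX c r hn hB hij
    rw [hp, hp] at h
    rw [Nat.dist_eq_sub_of_le hij]
    linarith [(abs_le.1 h).1]

lemma measure_block_empiricalMeasure_le_half_le (hX : Measurable X)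
    (hstat : P.map (fun ω => seqShift 1 (X ω)) = P.map X) (c : E) (r : ℕ) {n : ℕ}
    (hn : 0 < n) {B : Set (ℕ → E)} (hB : MeasurableSet B) {p : ℝ} (hp0 : 0 < p)
    (hp : P.real {ω | truncSeq c (r * n) (X ω) ∈ B} = p) {θ : ℝ} (hθ0 : 0 ≤ θ) (hθ1 : θ ≤ 1)
    (hα : Summable fun m => rosenblattCoeff P X m ^ θ) {k : ℕ} (hk : 0 < k) :
    P {ω | empiricalMeasure k (fun j => truncSeq c (r * n) (seqShift (j * n) (X ω))) B ≤
        ENNReal.ofReal (p / 2)} ≤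
      ENNReal.ofReal (8 * ∑' m, rosenblattCoeff P X (m - r) ^ θ) *
        ENNReal.ofReal (p ^ (-(1 + θ)) / k) := by
  set A : ℕ → Set Ω := fun j => {ω | truncSeq c (r * n) (seqShift (j * n) (X ω)) ∈ B}
  have hmeas : ∀ j, Measurable fun ω => truncSeq c (r * n) (seqShift (j * n) (X ω)) := fun j =>
    (measurable_truncSeq c (r * n)).comp ((measurable_seqShift (j * n)).comp hX)
  have hAp : ∀ j, P.real (A j) = p := fun j =>
    (congrArg ENNReal.toReal ((identDistrib_seqShift hX hstat (j * n)).measure_mem_eq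
      (measurable_truncSeq c (r * n) hB))).trans hp
  have hα0 : ∀ m, 0 ≤ rosenblattCoeff P X m := rosenblattCoeff_nonneg
  have hinter : ∀ i j, P.real (A i ∩ A j) - p * p ≤ p := fun i j =>
    (sub_le_self _ (by positivity)).trans ((measureReal_mono inter_subset_left).trans_eq (hAp i))
  have hα' : Summable fun m => rosenblattCoeff P X (m - r) ^ θ :=
    (summable_nat_add_iff r).1 (by simpa only [Nat.add_sub_cancel] using hα)
  refine (measure_empiricalMeasure_le_half_le hmeas hB hp0 hAp
    (b := fun m => p ^ (1 - θ) * rosenblattCoeff P X (m - r) ^ θ)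
    (fun m => mul_nonneg (by positivity) (rpow_nonneg (hα0 _) θ)) (hα'.mul_left _)
    (fun i j => le_rpow_mul_rpow_of_le_of_le hp0.le (hα0 _) hθ0 hθ1 (hinter i j)
      (measureReal_block_inter_sub_le hX c r hn hB hAp i j)) hk).trans_eq ?_
  have hpow : p ^ (1 - θ) = p ^ (-(1 + θ)) * p ^ 2 := by
    rw [← rpow_two, ← rpow_add hp0]
    ring_nf
  rw [← ENNReal.ofReal_mul (mul_nonneg (by norm_num) (tsum_nonneg fun m => rpow_nonneg (hα0 _) θ)),
    tsum_mul_left, hpow]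
  congr 1
  field_simp

end BlockEmpiricalMeasure

section AlmostSureGrowth

lemma exists_expGrowthSup_rpow_div_neg {p : ℕ → ℝ} {k : ℕ → ℕ} {I : ℝ}
    (hp : -(I : EReal) ≤ expGrowthInf fun n => ENNReal.ofReal (p n))
    (hk : (I : EReal) < expGrowthInf fun n => (k n : ℝ≥0∞)) :
    ∃ θ ∈ Ioo (0 : ℝ) 1,
      expGrowthSup (fun n => ENNReal.ofReal (p n ^ (-(1 + θ)) / k n)) < 0 := by
  obtain ⟨c, hIc, hck⟩ := EReal.lt_iff_exists_real_btwn.1 hk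
  obtain ⟨J, hIJ, hJc⟩ := exists_between (EReal.coe_lt_coe_iff.1 hIc)
  have hlim : Tendsto (fun θ : ℝ => J * (1 + θ)) (𝓝[>] 0) (𝓝 J) :=
    (Continuous.tendsto' (by fun_prop) 0 J (by simp)).mono_left nhdsWithin_le_nhds
  obtain ⟨θ, hθJ, hθ⟩ :=
    ((hlim.eventually_lt_const hJc).and (Ioo_mem_nhdsGT (one_pos (α := ℝ)))).exists
  have hJp : ((-J : ℝ) : EReal) < expGrowthInf fun n => ENNReal.ofReal (p n) :=
    lt_of_lt_of_le (by exact_mod_cast neg_lt_neg hIJ) hp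
  refine ⟨θ, hθ, lt_of_le_of_lt ?_ (EReal.coe_lt_coe_iff.2 (sub_neg.2 hθJ))⟩
  rw [← expGrowthSup_ofReal_exp (J * (1 + θ) - c)]
  refine expGrowthSup_eventually_monotone ?_
  filter_upwards [eventually_ofReal_exp_le hJp, eventually_ofReal_exp_le hck] with n hpn hkn
  have hpn' : exp (n * -J) ≤ p n :=
    (ENNReal.ofReal_le_ofReal_iff'.1 hpn).resolve_right (exp_pos _).not_ge
  have hkn' : exp (n * c) ≤ k n := by
    rwa [← ENNReal.ofReal_natCast, ENNReal.ofReal_le_ofReal_iff (Nat.cast_nonneg _)] at hkn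
  refine ENNReal.ofReal_le_ofReal ?_
  calc p n ^ (-(1 + θ)) / k n ≤ exp (n * -J) ^ (-(1 + θ)) / exp (n * c) := by
        gcongr ?_ / ?_
        exact rpow_le_rpow_of_nonpos (exp_pos _) hpn' (by linarith [hθ.1])
    _ = exp (n * (J * (1 + θ) - c)) := by
        rw [← exp_mul, ← exp_sub]
        ring_nf

variable {Ω : Type*} [MeasurableSpace Ω] {P : Measure Ω} {E : Type*} [MeasurableSpace E]
  {X : Ω → ℕ → E}

lemma ae_expGrowthSup_empiricalMeasure_le {β : Type*} [MeasurableSpace β] (hX : Measurable X)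
    (hstat : P.map (fun ω => seqShift 1 (X ω)) = P.map X) {g : ℕ → (ℕ → E) → β}
    (hg : ∀ n, Measurable (g n)) (k : ℕ → ℕ) {s : Set β} (hs : MeasurableSet s) :
    ∀ᵐ ω ∂P, expGrowthSup
        (fun n => empiricalMeasure (k n) (fun j => g n (seqShift (j * n) (X ω))) s) ≤
      expGrowthSup (fun n => P {ω | g n (X ω) ∈ s}) := by
  have hgX : ∀ n j, Measurable fun ω => g n (seqShift (j * n) (X ω)) := fun n j =>
    (hg n).comp ((measurable_seqShift (j * n)).comp hX)
  have hmean : ∀ n, ∫⁻ ω, empiricalMeasure (k n) (fun j => g n (seqShift (j * n) (X ω))) s ∂P ≤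
      P {ω | g n (X ω) ∈ s} := fun n =>
    lintegral_empiricalMeasure_le (k n) (hgX n) hs fun j =>
      (identDistrib_seqShift hX hstat (j * n)).measure_mem_eq (hg n hs)
  filter_upwards [ae_expGrowthSup_le_expGrowthSup_lintegral fun n =>
    (measurable_empiricalMeasure_apply (k n) (hgX n) hs).aemeasurable] with ω hω
  exact hω.trans (expGrowthSup_monotone hmean)

variable [IsProbabilityMeasure P]

lemma ae_le_expGrowthInf_block_empiricalMeasure (hX : Measurable X)
    (hstat : P.map (fun ω => seqShift 1 (X ω)) = P.map X)
    (hα : ∀ θ : ℝ, 0 < θ → Summable fun m => rosenblattCoeff P X m ^ θ) (c : E) (r : ℕ)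
    {k : ℕ → ℕ} {I : ℝ} (hk : (I : EReal) < expGrowthInf fun n => (k n : ℝ≥0∞))
    {B : ℕ → Set (ℕ → E)} (hB : ∀ n, MeasurableSet (B n))
    (hI : -(I : EReal) ≤ expGrowthInf fun n => P {ω | truncSeq c (r * n) (X ω) ∈ B n}) :
    ∀ᵐ ω ∂P, -(I : EReal) ≤ expGrowthInf fun n =>
      empiricalMeasure (k n) (fun j => truncSeq c (r * n) (seqShift (j * n) (X ω))) (B n) := by
  set p : ℕ → ℝ := fun n => P.real {ω | truncSeq c (r * n) (X ω) ∈ B n}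
  have hp : -(I : EReal) ≤ expGrowthInf fun n => ENNReal.ofReal (p n) := by
    simpa only [p, ofReal_measureReal (measure_ne_top P _)] using hI
  obtain ⟨θ, hθ, hneg⟩ := exists_expGrowthSup_rpow_div_neg hp hk
  have hbad : expGrowthSup (fun n => P {ω | empiricalMeasure (k n)
      (fun j => truncSeq c (r * n) (seqShift (j * n) (X ω))) (B n) ≤ ENNReal.ofReal (p n / 2)}) <
      0 := by
    refine (expGrowthSup_le_of_eventually_le (b := ENNReal.ofReal
      (8 * ∑' m, rosenblattCoeff P X (m - r) ^ θ)) ENNReal.ofReal_ne_top ?_).trans_lt hneg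
    filter_upwards [eventually_gt_atTop 0, eventually_pos_of_bot_lt_expGrowthInf hk.bot_lt,
      eventually_pos_of_bot_lt_expGrowthInf ((EReal.bot_lt_coe (-I)).trans_le hp)] with n hn hkn hpn
    exact measure_block_empiricalMeasure_le_half_le hX hstat c r hn (hB n)
      (ENNReal.ofReal_pos.1 hpn) rfl hθ.1.le hθ.2.le (hα θ hθ.1) (Nat.cast_pos.1 hkn)
  filter_upwards [ae_eventually_notMem_of_expGrowthSup_neg hbad] with ω hω
  refine hp.trans (expGrowthInf_le_of_eventually_le ENNReal.ofNat_ne_top (b := 2) ?_)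
  filter_upwards [hω] with n hn
  calc ENNReal.ofReal (p n) = 2 * ENNReal.ofReal (p n / 2) := by
        rw [← ENNReal.ofReal_ofNat, ← ENNReal.ofReal_mul zero_le_two, mul_div_cancel₀ _ two_ne_zero]
    _ ≤ _ := by gcongr; exact (not_le.1 hn).le

lemma ae_le_expGrowthInf_empiricalMeasure_closedBall {β : Type*} [PseudoMetricSpace β]
    [MeasurableSpace β] [OpensMeasurableSpace β] (hX : Measurable X)
    (hstat : P.map (fun ω => seqShift 1 (X ω)) = P.map X)
    (hα : ∀ θ : ℝ, 0 < θ → Summable fun m => rosenblattCoeff P X m ^ θ) {c : E} {r : ℕ}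
    {k : ℕ → ℕ} {I : ℝ} (hk : (I : EReal) < expGrowthInf fun n => (k n : ℝ≥0∞))
    {g : ℕ → (ℕ → E) → β} (hg : ∀ n, Measurable (g n))
    (hgc : ∀ ε > 0, ∀ᶠ n in atTop, ∀ z, dist (g n (truncSeq c (r * n) z)) (g n z) ≤ ε) {x : β}
    (hI : ∀ ε > 0,
      -(I : EReal) ≤ expGrowthInf fun n => P {ω | g n (X ω) ∈ Metric.closedBall x ε})
    {ε : ℝ} (hε : 0 < ε) :
    ∀ᵐ ω ∂P, -(I : EReal) ≤ expGrowthInf fun n => empiricalMeasure (k n)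
      (fun j => g n (seqShift (j * n) (X ω))) (Metric.closedBall x ε) := by
  have hball : ∀ n, MeasurableSet (g n ⁻¹' Metric.closedBall x (2 * ε / 3)) := fun n =>
    hg n Metric.isClosed_closedBall.measurableSet
  have hε3 := hgc (ε / 3) (by positivity)
  filter_upwards [ae_le_expGrowthInf_block_empiricalMeasure hX hstat hα c r hk hball <|
    (hI (ε / 3) (by positivity)).trans <| expGrowthInf_eventually_monotone <| by
      filter_upwards [hε3] with n hn
      refine measure_mono fun ω hω => ?_
      calc dist (g n (truncSeq c (r * n) (X ω))) x
          ≤ dist (g n (truncSeq c (r * n) (X ω))) (g n (X ω)) + dist (g n (X ω)) x :=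
            dist_triangle _ _ _
        _ ≤ ε / 3 + ε / 3 := add_le_add (hn _) hω
        _ = 2 * ε / 3 := by ring] with ω hω
  refine hω.trans (expGrowthInf_eventually_monotone ?_)
  filter_upwards [hε3] with n hn
  refine empiricalMeasure_le_empiricalMeasure _ (hball n) Metric.isClosed_closedBall.measurableSet
    fun j hj => ?_
  have hdist := dist_triangle_left (g n (seqShift (j * n) (X ω))) x
    (g n (truncSeq c (r * n) (seqShift (j * n) (X ω))))
  exact hdist.trans ((add_le_add (hn _) hj).trans_eq (by ring))

end AlmostSureGrowth

section SmallBalls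

lemma tendsto_nhdsGT_of_monotone_of_tendsto_comp {α β ι : Type*} [LinearOrder α]
    [TopologicalSpace α] [OrderTopology α] [CompleteLinearOrder β] [TopologicalSpace β]
    [OrderTopology β] {f : α → β} (hf : Monotone f) {l : Filter ι} [l.NeBot] {r : ι → α} {x : α}
    (hr : Tendsto r l (𝓝[>] x)) {y : β} (h : Tendsto (fun i => f (r i)) l (𝓝 y)) :
    Tendsto f (𝓝[>] x) (𝓝 y) := by
  have hlim := hf.tendsto_nhdsGT x
  rwa [tendsto_nhds_unique (hlim.comp hr) h] at hlim

lemma tendsto_expGrowth_closedBall {β : Type*} [PseudoMetricSpace β] [MeasurableSpace β]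
    {μ : ℕ → Measure β} {x : β} {I C : ℝ} {r : ℕ → ℝ} (hr : Tendsto r atTop (𝓝[>] 0))
    (hlow : ∀ q, -(I : EReal) ≤ expGrowthInf fun n => μ n (Metric.closedBall x (r q)))
    (hup : ∀ q, expGrowthSup (fun n => μ n (Metric.closedBall x (r q))) ≤
      ((C * r q - I : ℝ) : EReal)) :
    Tendsto (fun ε => expGrowthInf fun n => μ n (Metric.closedBall x ε)) (𝓝[>] 0)
      (𝓝 (-(I : EReal))) ∧
    Tendsto (fun ε => expGrowthSup fun n => μ n (Metric.closedBall x ε)) (𝓝[>] 0)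
      (𝓝 (-(I : EReal))) := by
  have hball : ∀ ⦃ε ε' : ℝ⦄, ε ≤ ε' → ∀ n, μ n (Metric.closedBall x ε) ≤
      μ n (Metric.closedBall x ε') := fun ε ε' h n =>
    measure_mono (Metric.closedBall_subset_closedBall h)
  have hlim : Tendsto (fun q => ((C * r q - I : ℝ) : EReal)) atTop (𝓝 (-(I : EReal))) := by
    refine (continuous_coe_real_ereal.tendsto (-I)).comp ?_
    simpa using ((hr.mono_right nhdsWithin_le_nhds).const_mul C).sub_const I
  exact ⟨tendsto_nhdsGT_of_monotone_of_tendsto_comp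
      (fun _ _ h => expGrowthInf_monotone (hball h)) hr (tendsto_of_tendsto_of_tendsto_of_le_of_le
        tendsto_const_nhds hlim hlow fun q => expGrowthInf_le_expGrowthSup.trans (hup q)),
    tendsto_nhdsGT_of_monotone_of_tendsto_comp
      (fun _ _ h => expGrowthSup_monotone (hball h)) hr (tendsto_of_tendsto_of_tendsto_of_le_of_le
        tendsto_const_nhds hlim (fun q => (hlow q).trans expGrowthInf_le_expGrowthSup) hup)⟩

end SmallBalls

section GeneralTheorem

variable {E : Type*} {V : Type*}

lemma eventually_dist_truncSeq_le [NormedAddCommGroup V] [NormedSpace ℝ V]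
    {S T : ℕ → (ℕ → E) → V} {r : ℕ}
    (hT : ∀ n (z z' : ℕ → E), (∀ i < r * n, z i = z' i) → T n z = T n z') {δ : ℕ → ℝ}
    (hδ : Tendsto δ atTop (𝓝 0)) (hST : ∀ n z, ‖S n z - T n z‖ ≤ n * δ n) (c : E) {ε : ℝ}
    (hε : 0 < ε) :
    ∀ᶠ n : ℕ in atTop, ∀ z,
      dist ((n : ℝ)⁻¹ • S n (truncSeq c (r * n) z)) ((n : ℝ)⁻¹ • S n z) ≤ ε := by
  filter_upwards [hδ.eventually_le_const (half_pos hε), eventually_gt_atTop 0] with n hδn hn z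
  have hn' : (0 : ℝ) < n := by exact_mod_cast hn
  have htrunc : T n (truncSeq c (r * n) z) = T n z := hT n _ _ fun i hi => if_pos hi
  rw [dist_smul₀, norm_inv, norm_natCast, inv_mul_le_iff₀ hn']
  calc dist (S n (truncSeq c (r * n) z)) (S n z)
      ≤ ‖S n (truncSeq c (r * n) z) - T n (truncSeq c (r * n) z)‖ + ‖S n z - T n z‖ := by
        rw [htrunc, ← dist_eq_norm, ← dist_eq_norm]
        exact dist_triangle_right _ _ _
    _ ≤ n * δ n + n * δ n := add_le_add (hST n _) (hST n z)
    _ ≤ n * ε := by nlinarith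

variable {Ω : Type*} [MeasurableSpace Ω] {P : Measure Ω} [IsProbabilityMeasure P]
  [MeasurableSpace E] {X : Ω → ℕ → E}

lemma summable_rosenblattCoeff_rpow (hX : Measurable X)
    (hα : ∀ h : ℝ, 0 < h →
      ∫⁻ u in Ioc (0 : ℝ) 1, generalizedInverse (rosenblattCoeff P X) u ^ h < ∞)
    {θ : ℝ} (hθ : 0 < θ) : Summable fun m => rosenblattCoeff P X m ^ θ :=
  summable_rpow_of_lintegral_generalizedInverse_lt_top (antitone_rosenblattCoeff hX)
    rosenblattCoeff_nonneg (rosenblattCoeff_le_one hX) hθ (hα _ (by positivity))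

theorem theorem5_part2_first_general [NormedAddCommGroup V] [InnerProductSpace ℝ V]
    [FiniteDimensional ℝ V] [MeasurableSpace V] [BorelSpace V]
    (hX : Measurable X) (hstat : P.map (fun ω => seqShift 1 (X ω)) = P.map X)
    (hα : ∀ h : ℝ, 0 < h →
      ∫⁻ u in Ioc (0 : ℝ) 1, generalizedInverse (rosenblattCoeff P X) u ^ h < ∞)
    {S T : ℕ → (ℕ → E) → V} (hS : ∀ n, Measurable (S n)) {r : ℕ}
    (hT : ∀ n (z z' : ℕ → E), (∀ i < r * n, z i = z' i) → T n z = T n z') {δ : ℕ → ℝ}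
    (hδ : Tendsto δ atTop (𝓝 0)) (hST : ∀ n z, ‖S n z - T n z‖ ≤ n * δ n)
    {D : Set V} {lam₀ x₀ : V} (hD : D ∈ 𝓝 lam₀) {Λ : V → ℝ}
    (hup : ∀ lam ∈ D, expGrowthSup (expMoment P (fun n ω => S n (X ω)) lam) ≤ Λ lam)
    (hlow : Λ lam₀ ≤ expGrowthInf (expMoment P (fun n ω => S n (X ω)) lam₀))
    (hx₀ : HasGradientAt Λ x₀ lam₀) {I : ℝ} (hI : I = ⨆ lam : D, (⟪(lam : V), x₀⟫ - Λ lam))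
    {k : ℕ → ℕ} (hk : (I : EReal) < expGrowthInf fun n => (k n : ℝ≥0∞)) :
    ∀ᵐ ω ∂P,
      Tendsto (fun ε => expGrowthInf fun n => empiricalMeasure (k n)
          (fun j => (n : ℝ)⁻¹ • S n (seqShift (j * n) (X ω))) (Metric.closedBall x₀ ε))
        (𝓝[>] 0) (𝓝 (-(I : EReal))) ∧
      Tendsto (fun ε => expGrowthSup fun n => empiricalMeasure (k n)
          (fun j => (n : ℝ)⁻¹ • S n (seqShift (j * n) (X ω))) (Metric.closedBall x₀ ε))
        (𝓝[>] 0) (𝓝 (-(I : EReal))) := by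
  have hY : ∀ n, Measurable fun ω => S n (X ω) := fun n => (hS n).comp hX
  have hSn : ∀ n : ℕ, Measurable fun z => (n : ℝ)⁻¹ • S n z := fun n => (hS n).const_smul _
  rw [iSup_inner_sub_eq hY hD hup hlow hx₀] at hI
  have hball_low : ∀ ε > 0, -(I : EReal) ≤ expGrowthInf fun n : ℕ =>
      P {ω | (n : ℝ)⁻¹ • S n (X ω) ∈ Metric.closedBall x₀ ε} := fun ε hε => by
    rw [hI, ← EReal.coe_neg, neg_sub]
    exact le_expGrowthInf_measure_closedBall hY (mem_of_superset hD hup) hlow hx₀ hε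
  have hball_up : ∀ ε : ℝ, expGrowthSup (fun n : ℕ =>
      P {ω | (n : ℝ)⁻¹ • S n (X ω) ∈ Metric.closedBall x₀ ε}) ≤ ((‖lam₀‖ * ε - I : ℝ) : EReal) :=
    fun ε => by
      have hchernoff := (add_expGrowthSup_measure_closedBall_le hY lam₀ x₀ ε).trans
        (hup lam₀ (mem_of_mem_nhds hD))
      rw [add_comm, ← EReal.le_sub_iff_add_le (by simp) (by simp), ← EReal.coe_sub] at hchernoff
      exact hchernoff.trans_eq (by rw [hI]; congr 1; ring)
  obtain ⟨ω₀⟩ : Nonempty Ω := nonempty_of_isProbabilityMeasure P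
  have hae_low := ae_all_iff.2 fun q : ℕ => ae_le_expGrowthInf_empiricalMeasure_closedBall hX hstat
    (fun _ => summable_rosenblattCoeff_rpow hX hα) hk hSn
    (fun _ => eventually_dist_truncSeq_le hT hδ hST (X ω₀ 0)) hball_low
    (Nat.one_div_pos_of_nat (α := ℝ) (n := q))
  have hae_up := ae_all_iff.2 fun q : ℕ => ae_expGrowthSup_empiricalMeasure_le hX hstat hSn k
    (s := Metric.closedBall x₀ (1 / ((q : ℝ) + 1))) Metric.isClosed_closedBall.measurableSet
  have hr : Tendsto (fun q : ℕ => 1 / ((q : ℝ) + 1)) atTop (𝓝[>] 0) := tendsto_nhdsWithin_iff.2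
    ⟨tendsto_one_div_add_atTop_nhds_zero_nat, .of_forall fun _ => mem_Ioi.2 Nat.one_div_pos_of_nat⟩
  filter_upwards [hae_low, hae_up] with ω hlowω hupω
  exact tendsto_expGrowth_closedBall hr hlowω fun q => (hupω q).trans (hball_up _)

end GeneralTheorem

/-- **Theorem 5(2), first part.**
Under (A1'), (A2), (A3), if `λ₀ ∈ D`, `Λ` is differentiable at `λ₀` with `x₀ = ∇Λ(λ₀)`,
and `liminf (log k(n))/n > Λ*(x₀)`, then almost surely
`lim_{ε→0} lim_{n→∞} (1/n) log μₙ^ω(B(x₀,ε)) = -Λ*(x₀)` (the limit over `n` expressed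
through the liminf and the limsup, both of which converge to `-Λ*(x₀)` as `ε → 0⁺`). -/
theorem theorem5_part2_first
    {Ω : Type*} [MeasurableSpace Ω] (P : Measure Ω) [IsProbabilityMeasure P]
    {E : Type*} [MeasurableSpace E] (d : ℕ)
    -- the stationary process
    (Xseq : Ω → ℕ → E) (hXmeas : Measurable Xseq)
    (hstat : Measure.map (fun ω => fun i => Xseq ω (i + 1)) P = Measure.map Xseq P)
    -- the ℝ^d-valued functionals SₙΦ
    (SΦ : ℕ → (ℕ → E) → EuclideanSpace ℝ (Fin d)) (hSΦmeas : ∀ n, Measurable (SΦ n))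
    -- the logarithmic moment generating functions Λₙ
    (Lmgf : ℕ → EuclideanSpace ℝ (Fin d) → EReal)
    (hLmgf : ∀ n lam, Lmgf n lam = ((n : ℝ)⁻¹ : EReal) *
      ENNReal.log (∫⁻ ω, ENNReal.ofReal (Real.exp ⟪lam, SΦ n (Xseq ω)⟫) ∂P))
    -- (A1'): Λₙ → Λ, finite on a convex open set D
    (D : Set (EuclideanSpace ℝ (Fin d))) (hDopen : IsOpen D) (hDconv : Convex ℝ D)
    (Λ : EuclideanSpace ℝ (Fin d) → ℝ)
    (hΛ : ∀ lam ∈ D, Tendsto (fun n => Lmgf n lam) atTop (nhds ((Λ lam : ℝ) : EReal)))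
    -- the Fenchel-Legendre transform of Λ
    (Λstar : EuclideanSpace ℝ (Fin d) → ℝ)
    (hΛstar : ∀ x, Λstar x = ⨆ lam : D, (⟪(lam : EuclideanSpace ℝ (Fin d)), x⟫ - Λ lam))
    -- (A2): mixing
    (alphaX : ℕ → ℝ) (halpha0 : alphaX 0 = 1 / 2)
    (halpha : ∀ m, 1 ≤ m → alphaX m = ⨆ i : ℕ, sSup {r : ℝ | ∃ A B : Set Ω,
      MeasurableSet[⨆ kk ∈ Set.Iic i,
        MeasurableSpace.comap (fun ω => Xseq ω kk) inferInstance] A ∧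
      MeasurableSet[⨆ jj ∈ Set.Ici (i + m),
        MeasurableSpace.comap (fun ω => Xseq ω jj) inferInstance] B ∧
      r = |(P A).toReal * (P B).toReal - (P (A ∩ B)).toReal|})
    (αinv : ℝ → ℝ≥0∞)
    (hαinv : ∀ u, αinv u = sInf ((fun m : ℕ => (m : ℝ≥0∞)) '' {m | alphaX m ≤ u}))
    (hA2 : ∀ h : ℝ, 0 < h → ∫⁻ u in Set.Ioc (0 : ℝ) 1, (αinv u) ^ h ∂volume < ⊤)
    -- (A3): approximation by functions of 2n coordinates
    (SΦapp : ℕ → (ℕ → E) → EuclideanSpace ℝ (Fin d))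
    (happdep : ∀ n (z z' : ℕ → E), (∀ i < 2 * n, z i = z' i) → SΦapp n z = SΦapp n z')
    (δ : ℕ → ℝ) (hδ0 : Tendsto δ atTop (nhds 0))
    (hδ : ∀ n z, ‖SΦ n z - SΦapp n z‖ ≤ (n : ℝ) * δ n)
    -- the sequence k(n)
    (k : ℕ → ℕ) (hkpos : ∀ n, 0 < k n)
    -- the empirical measures μₙ^ω
    (μω : ℕ → Ω → Measure (EuclideanSpace ℝ (Fin d)))
    (hμω : ∀ n ω, μω n ω = (k n : ℝ≥0∞)⁻¹ •
      ∑ j ∈ Finset.Icc 1 (k n),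
        Measure.dirac ((n : ℝ)⁻¹ • SΦ n (fun i => Xseq ω (i + (j - 1) * n))))
    -- λ₀ ∈ D at which Λ is differentiable, with gradient x₀
    (lam₀ : EuclideanSpace ℝ (Fin d)) (hlam₀ : lam₀ ∈ D)
    (x₀ : EuclideanSpace ℝ (Fin d)) (hx₀ : HasGradientAt Λ x₀ lam₀)
    (hliminf : (Λstar x₀ : EReal) <
      Filter.atTop.liminf (fun n => ((Real.log (k n) / n : ℝ) : EReal))) :
    ∀ᵐ ω ∂P,
      Tendsto (fun ε : ℝ =>
          Filter.atTop.liminf (fun n : ℕ =>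
            ((n : ℝ)⁻¹ : EReal) * ENNReal.log (μω n ω (Metric.closedBall x₀ ε))))
        (nhdsWithin 0 (Set.Ioi 0)) (nhds (-(Λstar x₀ : EReal))) ∧
      Tendsto (fun ε : ℝ =>
          Filter.atTop.limsup (fun n : ℕ =>
            ((n : ℝ)⁻¹ : EReal) * ENNReal.log (μω n ω (Metric.closedBall x₀ ε))))
        (nhdsWithin 0 (Set.Ioi 0)) (nhds (-(Λstar x₀ : EReal))) := by
  obtain rfl : alphaX = rosenblattCoeff P Xseq := by
    funext m
    cases m with
    | zero => exact halpha0
    | succ m => exact halpha (m + 1) (Nat.le_add_left 1 m)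
  obtain rfl : αinv = generalizedInverse (rosenblattCoeff P Xseq) := funext hαinv
  obtain rfl : μω = fun n ω => empiricalMeasure (k n) fun j =>
      (n : ℝ)⁻¹ • SΦ n (seqShift (j * n) (Xseq ω)) := by
    funext n ω
    rw [hμω, empiricalMeasure_eq_sum_Icc]
    rfl
  have hgrowth : ∀ lam ∈ D, Tendsto (fun n : ℕ =>
      ENNReal.log (expMoment P (fun n ω => SΦ n (Xseq ω)) lam n) / n) atTop (𝓝 (Λ lam)) :=
    fun lam hlam => (hΛ lam hlam).congr fun n => (hLmgf n lam).trans (inv_mul_log_eq_log_div n _)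
  simp only [coe_log_div_eq_log_div _ (hkpos _)] at hliminf
  simp only [inv_mul_log_eq_log_div]
  exact theorem5_part2_first_general hXmeas hstat hA2 hSΦmeas happdep hδ0 hδ
    (hDopen.mem_nhds hlam₀) (fun lam hlam => (hgrowth lam hlam).limsup_eq.le)
    (hgrowth lam₀ hlam₀).liminf_eq.ge hx₀ (hΛstar x₀) hliminf
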